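/- arXiv:2010.10813 — 3 statements merged into one kernel-verified Lean document; each statement's English description precedes it below -/
import Mathlib

section
/- Let p : List Γ → ℝ and define B(u) := Σ_{g ∈ Seg(u)} Π_{s ∈ g} p(s) for u : List Γ, so that B([]) = 1. Then for every nonempty word u of length i ≥ 1, the forward recursion B(u) = Σ_{k=0}^{i−1} B(u.take k) · p(u.drop k) holds, i.e. the total segmentation weight of u equals the sum over the position k of the last cut of the weight of the prefix of length k times the weight of the final segment. (Equation (9) of the paper, correctness of the forward dynamic program for b_{1,i}.) -/
open scoped Classical

variable {Γ : Type*}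

/-- A segmentation of a word `w` is a list of nonempty subwords whose concatenation is `w`. -/
def Seg (w : List Γ) : Set (List (List Γ)) :=
  {g | (∀ s ∈ g, s ≠ []) ∧ g.flatten = w}

theorem Seg.finite (w : List Γ) : (Seg w).Finite := by
  apply Set.Finite.subset
    (Set.finite_range fun c : Composition w.length => w.splitWrtComposition c)
  rintro g ⟨hne, hjoin⟩
  subst hjoin
  have hpos : ∀ {i : ℕ}, i ∈ g.map List.length → 0 < i := by
    intro i hi
    simp only [List.mem_map] at hi
    obtain ⟨s, hs, rfl⟩ := hi
    exact List.length_pos_iff.mpr (hne s hs)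
  refine ⟨⟨g.map List.length, hpos, by simp⟩, ?_⟩
  exact (List.splitWrtComposition_flatten g ⟨g.map List.length, hpos, by simp⟩ rfl)

/-- The (finite) set of segmentations of `w`, as a `Finset`. -/
noncomputable def SegF (w : List Γ) : Finset (List (List Γ)) := (Seg.finite w).toFinset

/-- Total segmentation weight `B(u) = Σ_{g ∈ Seg(u)} Π_{s ∈ g} p(s)`. -/
noncomputable def B (p : List Γ → ℝ) (u : List Γ) : ℝ :=
  ∑ g ∈ SegF u, (g.map p).prod

theorem mem_SegF {w : List Γ} {g : List (List Γ)} :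
    g ∈ SegF w ↔ (∀ s ∈ g, s ≠ []) ∧ g.flatten = w :=
  (Seg.finite w).mem_toFinset

theorem nil_notMem_SegF {u : List Γ} (hu : u ≠ []) : [] ∉ SegF u := fun h =>
  hu (mem_SegF.1 h).2.symm

theorem append_singleton_mem_SegF {u s : List Γ} {g : List (List Γ)} :
    g ++ [s] ∈ SegF u ↔ ∃ k < u.length, g ∈ SegF (u.take k) ∧ u.drop k = s := by
  constructor
  · intro h
    obtain ⟨hne, rfl⟩ := mem_SegF.1 h
    have hs : 0 < s.length := List.length_pos_iff.2 (hne s (by simp))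
    have hg : g ∈ SegF g.flatten := mem_SegF.2 ⟨fun t ht => hne t (by simp [ht]), rfl⟩
    exact ⟨g.flatten.length, by simpa using hs, by simpa using hg, by simp⟩
  · rintro ⟨k, hk, hg, rfl⟩
    obtain ⟨hne, hflat⟩ := mem_SegF.1 hg
    have hdrop : u.drop k ≠ [] := by simpa using hk
    refine mem_SegF.2 ⟨fun t ht => ?_, by simp [hflat]⟩
    rcases List.mem_append.1 ht with htg | htd
    · exact hne t htg
    · rwa [List.mem_singleton.1 htd]

theorem SegF_eq_biUnion {u : List Γ} (hu : u ≠ []) :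
    SegF u = (Finset.range u.length).biUnion fun k =>
      (SegF (u.take k)).image (· ++ [u.drop k]) := by
  ext g
  simp only [Finset.mem_biUnion, Finset.mem_range, Finset.mem_image]
  constructor
  · intro hg
    rcases List.eq_nil_or_concat' g with rfl | ⟨h, s, rfl⟩
    · exact absurd hg (nil_notMem_SegF hu)
    · obtain ⟨k, hk, hh, rfl⟩ := append_singleton_mem_SegF.1 hg
      exact ⟨k, hk, h, hh, rfl⟩
  · rintro ⟨k, hk, h, hh, rfl⟩
    exact append_singleton_mem_SegF.2 ⟨k, hk, hh, rfl⟩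

theorem injOn_drop (u : List Γ) : Set.InjOn (fun k => u.drop k) (Set.Iic u.length) := by
  intro k hk l hl h
  have hlen : u.length - k = u.length - l := by simpa using congrArg List.length h
  exact (tsub_right_inj hk hl).1 hlen

theorem pairwiseDisjoint_image_append_drop (u : List Γ) (S : ℕ → Finset (List (List Γ))) :
    (Set.Iic u.length).PairwiseDisjoint fun k => (S k).image (· ++ [u.drop k]) := by
  intro k hk l hl hkl
  refine Finset.disjoint_left.2 fun g hgk hgl => hkl (injOn_drop u hk hl ?_)
  obtain ⟨a, -, rfl⟩ := Finset.mem_image.1 hgk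
  obtain ⟨b, -, hba⟩ := Finset.mem_image.1 hgl
  exact List.singleton_inj.1 (List.append_inj_right' hba rfl).symm

theorem sum_SegF_eq_sum_range {M : Type*} [AddCommMonoid M] {u : List Γ} (hu : u ≠ [])
    (f : List (List Γ) → M) :
    ∑ g ∈ SegF u, f g =
      ∑ k ∈ Finset.range u.length, ∑ g ∈ SegF (u.take k), f (g ++ [u.drop k]) := by
  have hdisj := (pairwiseDisjoint_image_append_drop u fun k => SegF (u.take k)).subset
    fun k (hk : k ∈ Finset.range u.length) => (Finset.mem_range.1 hk).le
  rw [SegF_eq_biUnion hu, Finset.sum_biUnion hdisj]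
  exact Finset.sum_congr rfl fun k _ =>
    Finset.sum_image (List.append_left_injective [u.drop k]).injOn

theorem B_forward_recursion_general {R : Type*} [Semiring R] (p : List Γ → R) {u : List Γ}
    (hu : u ≠ []) :
    ∑ g ∈ SegF u, (g.map p).prod =
      ∑ k ∈ Finset.range u.length,
        (∑ g ∈ SegF (u.take k), (g.map p).prod) * p (u.drop k) := by
  simp only [sum_SegF_eq_sum_range hu, List.map_append, List.map_singleton, List.prod_append,
    List.prod_singleton, Finset.sum_mul]

/-- Equation (9): forward recursion for the total segmentation weight. -/
theorem B_forward_recursion (p : List Γ → ℝ) (u : List Γ) (hu : u ≠ []) :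
    B p u = ∑ k ∈ Finset.range u.length, B p (u.take k) * p (u.drop k) :=
  B_forward_recursion_general p hu
end

section
/- Let w : List Γ have length l and let 0 ≤ i < j ≤ l. The set of segmentations of w that contain the substring w[i+1:j] := (w.drop i).take (j−i) as a single segment with cuts exactly at positions i and j (i.e. segmentations of the form g₁ ++ [w[i+1:j]] ++ g₂ where g₁ is a segmentation of the length-i prefix and g₂ is a segmentation of the suffix after position j) is in bijection with Seg(w.take i) × Seg(w.drop j), the bijection being (g₁, g₂) ↦ g₁ ++ [w[i+1:j]] ++ g₂. (The three-part decomposition of segmentations through a fixed edge of the subword transition graph, Section 3.2.) -/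
open scoped Classical

variable {Γ : Type*}

/-!
The empty word has only the empty segmentation, so no segmentation of `u` is a proper prefix of
another one. A list of words therefore has at most one prefix that is a segmentation of `u`, and
this makes `g₁`, hence also `g₂`, recoverable from `g₁ ++ [s] ++ g₂`.
-/

namespace Seg

theorem mem_nil_iff {g : List (List Γ)} : g ∈ Seg ([] : List Γ) ↔ g = [] := by
  refine ⟨fun ⟨hne, hflat⟩ ↦ ?_, fun hg ↦ ?_⟩
  · exact List.eq_nil_iff_forall_not_mem.mpr fun s hs ↦
      hne s hs (List.flatten_eq_nil_iff.mp hflat s hs)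
  · simp [hg, Seg]

theorem singleton_mem {s : List Γ} (hs : s ≠ []) : [s] ∈ Seg s := by
  simpa [Seg] using hs

theorem append_mem {u v : List Γ} {g h : List (List Γ)} (hg : g ∈ Seg u) (hh : h ∈ Seg v) :
    g ++ h ∈ Seg (u ++ v) :=
  ⟨List.forall_mem_append.mpr ⟨hg.1, hh.1⟩, by rw [List.flatten_append, hg.2, hh.2]⟩

theorem eq_of_isPrefix {u : List Γ} {g g' : List (List Γ)} (hg : g ∈ Seg u) (hg' : g' ∈ Seg u)
    (hpre : g <+: g') : g = g' := by
  obtain ⟨r, rfl⟩ := hpre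
  have hflat : r.flatten = [] := by
    simpa only [List.flatten_append, hg.2, List.append_right_eq_self] using hg'.2
  have hr : r = [] :=
    mem_nil_iff.mp ⟨fun s hs ↦ hg'.1 s (List.mem_append_right g hs), hflat⟩
  rw [hr, List.append_nil]

theorem append_inj {u : List Γ} {g g' r r' : List (List Γ)} (hg : g ∈ Seg u) (hg' : g' ∈ Seg u)
    (heq : g ++ r = g' ++ r') : g = g' ∧ r = r' := by
  have hgg' : g = g' := by
    rcases List.prefix_or_prefix_of_prefix ⟨r, heq⟩ (List.prefix_append g' r') with hpre | hpre
    · exact eq_of_isPrefix hg hg' hpre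
    · exact (eq_of_isPrefix hg' hg hpre).symm
  subst hgg'
  exact ⟨rfl, List.append_cancel_left heq⟩

theorem bijOn_append_singleton_append (u v : List Γ) {s : List Γ} (hs : s ≠ []) :
    Set.BijOn (fun q : List (List Γ) × List (List Γ) => q.1 ++ [s] ++ q.2)
      (Seg u ×ˢ Seg v)
      {g ∈ Seg (u ++ s ++ v) | ∃ g₁ ∈ Seg u, ∃ g₂ ∈ Seg v, g = g₁ ++ [s] ++ g₂} := by
  refine ⟨?mapsTo, ?injOn, ?surjOn⟩
  case mapsTo =>
    rintro ⟨g₁, g₂⟩ ⟨hg₁, hg₂⟩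
    exact ⟨append_mem (append_mem hg₁ (singleton_mem hs)) hg₂, g₁, hg₁, g₂, hg₂, rfl⟩
  case injOn =>
    rintro ⟨g₁, g₂⟩ ⟨hg₁, -⟩ ⟨g₁', g₂'⟩ ⟨hg₁', -⟩ heq
    simp only [List.append_assoc] at heq
    obtain ⟨rfl, htail⟩ := append_inj hg₁ hg₁' heq
    rw [List.append_cancel_left htail]
  case surjOn =>
    rintro g ⟨-, g₁, hg₁, g₂, hg₂, rfl⟩
    exact ⟨(g₁, g₂), ⟨hg₁, hg₂⟩, rfl⟩

end Seg

theorem take_append_take_drop_append_drop {i j : ℕ} (hij : i ≤ j) (w : List Γ) :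
    w.take i ++ (w.drop i).take (j - i) ++ w.drop j = w := by
  calc w.take i ++ (w.drop i).take (j - i) ++ w.drop j
      = w.take j ++ w.drop j := by rw [← List.take_add, Nat.add_sub_cancel' hij]
    _ = w := List.take_append_drop j w

/-- Three-part decomposition: segmentations of `w` that contain `w[i+1:j]` as a single
segment with cuts exactly at positions `i` and `j` are in bijection with
`Seg (w.take i) × Seg (w.drop j)` via `(g₁, g₂) ↦ g₁ ++ [w[i+1:j]] ++ g₂`. -/
theorem seg_through_edge_bijOn (w : List Γ) (i j : ℕ) (hij : i < j) (hj : j ≤ w.length) :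
    Set.BijOn
      (fun q : List (List Γ) × List (List Γ) =>
        q.1 ++ [(w.drop i).take (j - i)] ++ q.2)
      (Seg (w.take i) ×ˢ Seg (w.drop j))
      {g ∈ Seg w | ∃ g₁ ∈ Seg (w.take i), ∃ g₂ ∈ Seg (w.drop j),
        g = g₁ ++ [(w.drop i).take (j - i)] ++ g₂} := by
  have hseg : (w.drop i).take (j - i) ≠ [] := by
    rw [← List.length_pos_iff, List.length_take, List.length_drop]
    omega
  simpa only [take_append_take_drop_append_drop hij.le w] using
    Seg.bijOn_append_singleton_append (w.take i) (w.drop j) hseg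
end

section
/- Let p : List Γ → ℝ, let w : List Γ have length l, and fix a string s : List Γ. Then Σ_{g ∈ Seg(w)} (Π_{t ∈ g} p(t)) · (number of entries of g equal to s) = Σ_{0 ≤ i < j ≤ l, w[i+1:j] = s} p(s) · B(w.take i) · B(w.drop j), i.e. the segmentation-weight of s accumulated over all occurrences (counted with multiplicity, as a subword may occur several times in w) equals the sum of the unnormalized weights ã over all positions (i, j) at which s occurs as a substring of w. (Correctness of the aggregation step, lines 8–11 of Algorithm 1.) -/
open scoped Classical

variable {Γ : Type*}

/-! A segmentation of `w` with one block `s` singled out is a pair `(g₁, g₂)` such that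
`g₁ ++ s :: g₂` segments `w`. Grouping these pairs by the segmentation `g₁ ++ s :: g₂` gives each
segmentation as often as it contains `s`; grouping them by the position of the singled-out block in
`w` leaves an arbitrary segmentation of what precedes it and an arbitrary segmentation of what
follows it. -/

section Splits

variable {α : Type*} [BEq α]

/-- The ways of cutting a list `l` around an entry equal to `a`: the pairs `(l₁, l₂)` with
`l₁ ++ a :: l₂ = l`, recursively on `l` so that they form a `Finset`. -/
def splitsAround (a : α) : List α → Finset (List α × List α)
  | [] => ∅
  | b :: l =>
    let later := (splitsAround a l).map
      ⟨Prod.map (b :: ·) id, List.cons_injective.prodMap Function.injective_id⟩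
    if b == a then later.cons ([], l) (by simp [later]) else later

theorem card_splitsAround (a : α) (l : List α) : (splitsAround a l).card = l.count a := by
  induction l with
  | nil => rfl
  | cons b l ih => by_cases hb : b == a <;> simp [splitsAround, List.count_cons, hb, ih]

variable [LawfulBEq α]

theorem mem_splitsAround {a : α} {l : List α} {x : List α × List α} :
    x ∈ splitsAround a l ↔ x.1 ++ a :: x.2 = l := by
  induction l generalizing x with
  | nil => simp [splitsAround]
  | cons b l ih =>
    have mem_cons : x ∈ splitsAround a (b :: l) ↔ (b = a ∧ x = ([], l)) ∨
        ∃ l₁ l₂, l₁ ++ a :: l₂ = l ∧ (b :: l₁, l₂) = x := by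
      by_cases hb : b = a <;> simp [splitsAround, hb, ih]
    rw [mem_cons, List.append_eq_cons_iff]
    grind

theorem pairwiseDisjoint_splitsAround (a : α) (S : Set (List α)) :
    S.PairwiseDisjoint (splitsAround a) := fun _ _ _ _ hne =>
  Finset.disjoint_left.mpr fun _ hx hy =>
    hne ((mem_splitsAround.mp hx).symm.trans (mem_splitsAround.mp hy))

theorem sum_splitsAround {R : Type*} [Semiring R] (p : α → R) (a : α) (l : List α) :
    ∑ x ∈ splitsAround a l, (x.1.map p).prod * p a * (x.2.map p).prod =
      (l.map p).prod * (l.count a : R) := by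
  have hconst : ∀ x ∈ splitsAround a l,
      (x.1.map p).prod * p a * (x.2.map p).prod = (l.map p).prod := by
    intro x hx
    rw [← mem_splitsAround.mp hx, List.map_append, List.map_cons, List.prod_append,
      List.prod_cons, mul_assoc]
  rw [Finset.sum_congr rfl hconst, Finset.sum_const, card_splitsAround, nsmul_eq_mul']

end Splits

section Occurrences

variable [DecidableEq Γ]

/-- The positions `(i, j)` with `i < j` at which `s` occurs in `w` as the substring `w[i+1:j]`;
the empty word therefore has no occurrences. -/
def occurrences (s w : List Γ) : Finset (ℕ × ℕ) :=
  (Finset.range (w.length + 1) ×ˢ Finset.range (w.length + 1)).filter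
    (fun q => q.1 < q.2 ∧ (w.drop q.1).take (q.2 - q.1) = s)

theorem mem_occurrences {s w : List Γ} {q : ℕ × ℕ} :
    q ∈ occurrences s w ↔
      s ≠ [] ∧ q.2 = q.1 + s.length ∧ w.take q.1 ++ s ++ w.drop q.2 = w := by
  obtain ⟨i, j⟩ := q
  simp only [occurrences, Finset.mem_filter, Finset.mem_product, Finset.mem_range,
    ← List.length_pos_iff]
  constructor
  · rintro ⟨⟨-, hj⟩, hij, rfl⟩
    have hdrop : w.drop j = (w.drop i).drop (j - i) := by
      rw [List.drop_drop, Nat.add_sub_cancel' hij.le]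
    refine ⟨by grind, by grind, ?_⟩
    rw [hdrop, List.append_assoc, List.take_append_drop, List.take_append_drop]
  · rintro ⟨hs, rfl, hw⟩
    have hlen : i + s.length ≤ w.length := by
      have := congrArg List.length hw
      grind
    have hdrop : w.drop i = s ++ w.drop (i + s.length) := by
      rw [← List.append_right_inj (w.take i), List.take_append_drop, ← List.append_assoc, hw]
    refine ⟨by omega, by omega, ?_⟩
    rw [hdrop, Nat.add_sub_cancel_left, List.take_left]

theorem append_cons_mem_SegF {s w : List Γ} {g₁ g₂ : List (List Γ)} :
    g₁ ++ s :: g₂ ∈ SegF w ↔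
      ∃ q ∈ occurrences s w, g₁ ∈ SegF (w.take q.1) ∧ g₂ ∈ SegF (w.drop q.2) := by
  simp only [mem_SegF, mem_occurrences, List.forall_mem_append, List.forall_mem_cons,
    List.flatten_append, List.flatten_cons]
  constructor
  · rintro ⟨⟨h₁, hs, h₂⟩, rfl⟩
    have hdrop : (g₁.flatten ++ (s ++ g₂.flatten)).drop (g₁.flatten.length + s.length) =
        g₂.flatten := by
      rw [← List.append_assoc, ← List.length_append, List.drop_left]
    refine ⟨(g₁.flatten.length, g₁.flatten.length + s.length), ⟨hs, rfl, ?_⟩, ⟨h₁, ?_⟩, h₂, ?_⟩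
    · rw [hdrop, List.take_left, List.append_assoc]
    · rw [List.take_left]
    · rw [hdrop]
  · rintro ⟨q, ⟨hs, -, hw⟩, ⟨h₁, hg₁⟩, h₂, hg₂⟩
    exact ⟨⟨h₁, hs, h₂⟩, by rw [hg₁, hg₂, ← List.append_assoc, hw]⟩

theorem biUnion_splitsAround_SegF (s w : List Γ) :
    (SegF w).biUnion (splitsAround s) =
      (occurrences s w).biUnion fun q => SegF (w.take q.1) ×ˢ SegF (w.drop q.2) := by
  ext x
  simp only [Finset.mem_biUnion, mem_splitsAround, Finset.mem_product, exists_eq_right',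
    append_cons_mem_SegF]

theorem eq_of_mem_occurrences {s w : List Γ} {q : ℕ × ℕ} {g : List (List Γ)}
    (hq : q ∈ occurrences s w) (hg : g ∈ SegF (w.take q.1)) :
    q = (g.flatten.length, g.flatten.length + s.length) := by
  obtain ⟨-, hlen, -⟩ := mem_occurrences.mp hq
  simp only [occurrences, Finset.mem_filter, Finset.mem_product, Finset.mem_range] at hq
  have hstart : g.flatten.length = q.1 := by
    rw [(mem_SegF.mp hg).2, List.length_take_of_le (by omega)]
  rw [hstart, ← hlen]

theorem pairwiseDisjoint_SegF_product (s w : List Γ) :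
    (occurrences s w : Set (ℕ × ℕ)).PairwiseDisjoint
      fun q => SegF (w.take q.1) ×ˢ SegF (w.drop q.2) := fun _ hq _ hr hne =>
  Finset.disjoint_left.mpr fun _ hx hy => hne <|
    (eq_of_mem_occurrences hq (Finset.mem_product.mp hx).1).trans
      (eq_of_mem_occurrences hr (Finset.mem_product.mp hy).1).symm

end Occurrences

section Weight

variable {R : Type*} [Semiring R]

/-- The total segmentation weight of `u`, for weights in an arbitrary semiring; over `ℝ` it is
`B p u` by definition. -/
noncomputable def segmentationWeight (p : List Γ → R) (u : List Γ) : R :=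
  ∑ g ∈ SegF u, (g.map p).prod

theorem sum_SegF_product (p : List Γ → R) (c : R) (u v : List Γ) :
    ∑ x ∈ SegF u ×ˢ SegF v, (x.1.map p).prod * c * (x.2.map p).prod =
      segmentationWeight p u * c * segmentationWeight p v := by
  simp only [segmentationWeight, Finset.sum_mul, Finset.mul_sum, Finset.sum_product_right]

theorem subword_weight_aggregation_general [DecidableEq Γ] (p : List Γ → R) (w s : List Γ) :
    ∑ g ∈ SegF w, (g.map p).prod * (g.count s : R) =
      ∑ q ∈ occurrences s w,
        segmentationWeight p (w.take q.1) * p s * segmentationWeight p (w.drop q.2) := by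
  simp only [← sum_splitsAround, ← sum_SegF_product]
  rw [← Finset.sum_biUnion (pairwiseDisjoint_splitsAround s _), biUnion_splitsAround_SegF,
    Finset.sum_biUnion (pairwiseDisjoint_SegF_product s w)]

end Weight

/-- Correctness of the aggregation step (lines 8–11 of Algorithm 1): the
segmentation weight of `s` accumulated with multiplicity equals the sum of the
unnormalized weights over all positions at which `s` occurs as a substring. -/
theorem subword_weight_aggregation [DecidableEq Γ] (p : List Γ → ℝ) (w : List Γ)
    (s : List Γ) :
    ∑ g ∈ SegF w, (g.map p).prod * (g.count s : ℝ)
      = ∑ q ∈ (Finset.range (w.length + 1) ×ˢ Finset.range (w.length + 1)).filter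
          (fun q => q.1 < q.2 ∧ (w.drop q.1).take (q.2 - q.1) = s),
          p s * B p (w.take q.1) * B p (w.drop q.2) := by
  simp only [mul_comm (p s)]
  exact subword_weight_aggregation_general p w s
end
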